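/- Let μ > 0, let g : ℝⁿ → ℝ be a differentiable convex function, and let f : ℝⁿ → ℝ be a differentiable function that is μ-uniformly convex with respect to g and satisfies f(0) = 0 and f(x) ≥ 0 for all x. Let α, β : [0,∞) → ℝ be differentiable functions satisfying exp(α(t)) ≥ β'(t) > 0 for all t ≥ 0. Suppose Z : [0,∞) → ℝⁿ is differentiable and the curve t ↦ ∇g(Z(t)) is differentiable with derivative (d/dt)∇g(Z(t)) = −(exp(α(t))/μ)·∇f(Z(t)) for every t ≥ 0. Then the energy Ẽ(t) = exp(β(t))·(μ·D_g(0, Z(t)) + f(Z(t))) is monotonically non-increasing on [0,∞), and f(Z(t)) ≤ exp(−β(t))·Ẽ(0) for all t ≥ 0. -/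

import Mathlib

open Set RealInnerProductSpace

/-- Bregman divergence `D_g(y, x) = g(y) − g(x) − ⟨∇g(x), y − x⟩`, where `g'`
is the gradient map of `g`. -/
noncomputable def breg {n : ℕ} (g : EuclideanSpace ℝ (Fin n) → ℝ)
    (g' : EuclideanSpace ℝ (Fin n) → EuclideanSpace ℝ (Fin n))
    (y x : EuclideanSpace ℝ (Fin n)) : ℝ :=
  g y - g x - ⟪g' x, y - x⟫

/-!
Let `x₀` minimize `f` and put `V(z) = μ D_g(x₀, z) + f(z) − f(x₀)`. Along the flow,
`V' = −e^α ⟪∇f(Z), Z − x₀⟫ + ⟪∇f(Z), Z'⟫`. The last term is nonpositive: `∇f(Z)` is a negative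
multiple of `(∇g(Z))'`, and `⟪(∇g(Z))', Z'⟫ ≥ 0` because `∇g` is monotone. Uniform convexity bounds
the inner product in the first term below by `V(Z) ≥ 0`, so `V' ≤ −e^α V ≤ −β' V` and `e^β V` is
nonincreasing.
-/

theorem antitoneOn_exp_mul_of_hasDerivWithinAt_le {s : Set ℝ} {V V' β β' : ℝ → ℝ} (hs : Convex ℝ s)
    (hβ : ∀ t ∈ s, HasDerivWithinAt β (β' t) s t)
    (hV : ∀ t ∈ s, HasDerivWithinAt V (V' t) s t)
    (hV_le : ∀ t ∈ s, V' t ≤ -(β' t * V t)) :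
    AntitoneOn (fun t => Real.exp (β t) * V t) s := by
  have hderiv (t) (ht : t ∈ s) : HasDerivWithinAt (fun u => Real.exp (β u) * V u)
      (Real.exp (β t) * (β' t * V t + V' t)) s t :=
    ((hβ t ht).exp.mul (hV t ht)).congr_deriv (by ring)
  refine antitoneOn_of_hasDerivWithinAt_nonpos hs
    (fun t ht => (hderiv t ht).continuousWithinAt)
    (fun t ht => (hderiv t (interior_subset ht)).mono interior_subset) fun t ht => ?_
  exact mul_nonpos_of_nonneg_of_nonpos (Real.exp_pos _).le
    (by linarith [hV_le t (interior_subset ht)])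

section InnerProductSpace

open Filter Topology

variable {F : Type*} [NormedAddCommGroup F] [InnerProductSpace ℝ F]

theorem inner_nonneg_of_hasDerivWithinAt {X Y : ℝ → F} {X' Y' : F} {s : Set ℝ} {t : ℝ}
    (hs : UniqueDiffWithinAt ℝ s t)
    (hX : HasDerivWithinAt X X' s t) (hY : HasDerivWithinAt Y Y' s t)
    (hXY : ∀ u ∈ s, 0 ≤ ⟪X u - X t, Y u - Y t⟫) : 0 ≤ ⟪X', Y'⟫ := by
  have : (𝓝[s \ {t}] t).NeBot :=
    accPt_principal_iff_nhdsWithin.1 (uniqueDiffWithinAt_iff_accPt.1 hs)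
  have hlim := (hasDerivWithinAt_iff_tendsto_slope.1 hX).inner (𝕜 := ℝ)
    (hasDerivWithinAt_iff_tendsto_slope.1 hY)
  refine ge_of_tendsto hlim (eventually_mem_nhdsWithin.mono fun u hu => ?_)
  simp only [slope, vsub_eq_sub, real_inner_smul_left, real_inner_smul_right, ← mul_assoc]
  exact mul_nonneg (mul_self_nonneg _) (hXY u hu.1)

theorem inner_velocity_nonpos_of_flow {g' : F → F} {Z : ℝ → F} {Z' v : F} {s : Set ℝ} {t c : ℝ}
    (hc : 0 < c) (hs : UniqueDiffWithinAt ℝ s t)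
    (hmono : ∀ x y, 0 ≤ ⟪g' x - g' y, x - y⟫) (hZ : HasDerivWithinAt Z Z' s t)
    (hflow : HasDerivWithinAt (fun u => g' (Z u)) (-c • v) s t) :
    ⟪v, Z'⟫ ≤ 0 := by
  have h : 0 ≤ ⟪-c • v, Z'⟫ :=
    inner_nonneg_of_hasDerivWithinAt hs hflow hZ fun u _ => hmono (Z u) (Z t)
  rw [real_inner_smul_left] at h
  exact nonpos_of_mul_nonneg_right h (neg_lt_zero.2 hc)

/-- The Bregman divergence `breg` in an arbitrary real inner product space. The map `g'` is meant
to be the gradient of `g`; it is a separate argument, as in `breg`. -/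
noncomputable def bregmanDiv (g : F → ℝ) (g' : F → F) (y x : F) : ℝ :=
  g y - g x - ⟪g' x, y - x⟫

theorem bregmanDiv_add_swap (g : F → ℝ) (g' : F → F) (x y : F) :
    bregmanDiv g g' x y + bregmanDiv g g' y x = ⟪g' x - g' y, x - y⟫ := by
  simp only [bregmanDiv, inner_sub_left, inner_sub_right]
  ring

/-- The Lyapunov function `V(z) = μ D_g(x₀, z) + f(z) − f(x₀)` measuring how far `z` is from the
minimizer `x₀` of `f`; the energy of the flow is `e^β V(Z)`. -/
noncomputable def bregmanGap (μ : ℝ) (f g : F → ℝ) (g' : F → F) (x₀ z : F) : ℝ :=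
  μ * bregmanDiv g g' x₀ z + (f z - f x₀)

theorem bregmanGap_le_inner {μ : ℝ} {f g : F → ℝ} {f' g' : F → F} {x₀ z : F}
    (h : μ * bregmanDiv g g' x₀ z ≤ bregmanDiv f f' x₀ z) :
    bregmanGap μ f g g' x₀ z ≤ ⟪f' z, z - x₀⟫ := by
  have hDf : bregmanDiv f f' x₀ z = ⟪f' z, z - x₀⟫ - (f z - f x₀) := by
    rw [bregmanDiv, ← neg_sub z x₀, inner_neg_right]
    ring
  rw [bregmanGap]
  linarith

variable [CompleteSpace F]

theorem bregmanDiv_nonneg {S : Set F} {g : F → ℝ} {g' : F → F} {x y : F}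
    (hg : ConvexOn ℝ S g) (hx : x ∈ S) (hy : y ∈ S) (hgx : HasGradientAt g (g' x) x) :
    0 ≤ bregmanDiv g g' y x := by
  let ℓ : ℝ →ᵃ[ℝ] F := AffineMap.lineMap x y
  have hderiv : HasDerivAt (g ∘ ℓ) ⟪g' x, y - x⟫ 0 :=
    hgx.hasFDerivAt.comp_hasDerivAt_of_eq 0 AffineMap.hasDerivAt_lineMap
      (AffineMap.lineMap_apply_zero x y).symm
  have hslope : ⟪g' x, y - x⟫ ≤ slope (g ∘ ℓ) 0 1 :=
    (hg.comp_affineMap ℓ).le_slope_of_hasDerivAt (by simpa [ℓ] using hx) (by simpa [ℓ] using hy)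
      one_pos hderiv
  have hslope_eq : slope (g ∘ ℓ) 0 1 = g y - g x := by simp [ℓ, slope_def_field]
  rw [bregmanDiv]
  linarith

theorem inner_gradient_sub_nonneg {S : Set F} {g : F → ℝ} {g' : F → F} {x y : F}
    (hg : ConvexOn ℝ S g) (hx : x ∈ S) (hy : y ∈ S)
    (hgx : HasGradientAt g (g' x) x) (hgy : HasGradientAt g (g' y) y) :
    0 ≤ ⟪g' x - g' y, x - y⟫ := by
  rw [← bregmanDiv_add_swap g g' x y]
  exact add_nonneg (bregmanDiv_nonneg hg hy hx hgy) (bregmanDiv_nonneg hg hx hy hgx)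

section Curves

variable {f g : F → ℝ} {f' g' : F → F} {Z : ℝ → F} {Z' W v : F} {s : Set ℝ} {t : ℝ}

theorem hasDerivWithinAt_comp_of_hasGradientAt (hf : HasGradientAt f v (Z t))
    (hZ : HasDerivWithinAt Z Z' s t) :
    HasDerivWithinAt (fun u => f (Z u)) ⟪v, Z'⟫ s t :=
  hf.hasFDerivAt.comp_hasDerivWithinAt t hZ

theorem hasDerivWithinAt_bregmanDiv_comp (y : F) (hg : HasGradientAt g (g' (Z t)) (Z t))
    (hZ : HasDerivWithinAt Z Z' s t) (hW : HasDerivWithinAt (fun u => g' (Z u)) W s t) :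
    HasDerivWithinAt (fun u => bregmanDiv g g' y (Z u)) ⟪W, Z t - y⟫ s t := by
  refine (((hasDerivWithinAt_comp_of_hasGradientAt hg hZ).const_sub (g y)).sub
    (hW.inner ℝ (hZ.const_sub y))).congr_deriv ?_
  simp only [inner_neg_right, inner_sub_right]
  ring

theorem hasDerivWithinAt_bregmanGap_comp {μ c : ℝ} (hμ : μ ≠ 0) (x₀ : F)
    (hf : HasGradientAt f v (Z t)) (hg : HasGradientAt g (g' (Z t)) (Z t))
    (hZ : HasDerivWithinAt Z Z' s t)
    (hflow : HasDerivWithinAt (fun u => g' (Z u)) (-(c / μ) • v) s t) :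
    HasDerivWithinAt (fun u => bregmanGap μ f g g' x₀ (Z u))
      (-(c * ⟪v, Z t - x₀⟫) + ⟪v, Z'⟫) s t := by
  refine (((hasDerivWithinAt_bregmanDiv_comp x₀ hg hZ hflow).const_mul μ).add
    ((hasDerivWithinAt_comp_of_hasGradientAt hf hZ).sub_const (f x₀))).congr_deriv ?_
  rw [real_inner_smul_left]
  field_simp

end Curves

theorem godeuc_a_one_energy_decay_general {μ : ℝ} (hμ : 0 < μ)
    {f g : F → ℝ} {f' g' : F → F} {x₀ : F}
    (hf' : ∀ x, HasGradientAt f (f' x) x)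
    (hg' : ∀ x, HasGradientAt g (g' x) x)
    (hgconv : ConvexOn ℝ univ g)
    (hunif : ∀ x, μ * bregmanDiv g g' x₀ x ≤ bregmanDiv f f' x₀ x)
    (hmin : ∀ x, f x₀ ≤ f x)
    {α β β' : ℝ → ℝ}
    (hβ : ∀ t, 0 ≤ t → HasDerivWithinAt β (β' t) (Ici 0) t)
    (hscale : ∀ t, 0 ≤ t → β' t ≤ Real.exp (α t))
    {Z Z' : ℝ → F}
    (hZ : ∀ t, 0 ≤ t → HasDerivWithinAt Z (Z' t) (Ici 0) t)
    (hODE : ∀ t, 0 ≤ t →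
      HasDerivWithinAt (fun u => g' (Z u)) (-(Real.exp (α t) / μ) • f' (Z t)) (Ici 0) t)
    {E : ℝ → ℝ}
    (hE : ∀ t, E t = Real.exp (β t) * bregmanGap μ f g g' x₀ (Z t)) :
    AntitoneOn E (Ici 0) ∧ ∀ t, 0 ≤ t → f (Z t) - f x₀ ≤ Real.exp (-β t) * E 0 := by
  have hD (z : F) : 0 ≤ bregmanDiv g g' x₀ z :=
    bregmanDiv_nonneg hgconv (mem_univ z) (mem_univ x₀) (hg' z)
  have hsub_le (z : F) : f z - f x₀ ≤ bregmanGap μ f g g' x₀ z :=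
    le_add_of_nonneg_left (mul_nonneg hμ.le (hD z))
  have hmono (x y : F) : 0 ≤ ⟪g' x - g' y, x - y⟫ :=
    inner_gradient_sub_nonneg hgconv (mem_univ x) (mem_univ y) (hg' x) (hg' y)
  have hanti : AntitoneOn E (Ici 0) := by
    rw [funext hE]
    refine antitoneOn_exp_mul_of_hasDerivWithinAt_le (convex_Ici 0) hβ (fun t ht =>
      hasDerivWithinAt_bregmanGap_comp hμ.ne' x₀ (hf' _) (hg' _) (hZ t ht) (hODE t ht))
      fun t ht => ?_
    have hvelocity : ⟪f' (Z t), Z' t⟫ ≤ 0 := inner_velocity_nonpos_of_flow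
      (div_pos (Real.exp_pos _) hμ) (uniqueDiffOn_Ici 0 t ht) hmono (hZ t ht) (hODE t ht)
    have hrate : β' t * bregmanGap μ f g g' x₀ (Z t) ≤ Real.exp (α t) * ⟪f' (Z t), Z t - x₀⟫ :=
      mul_le_mul (hscale t ht) (bregmanGap_le_inner (hunif _))
        ((sub_nonneg.2 (hmin _)).trans (hsub_le _)) (Real.exp_pos _).le
    linarith
  refine ⟨hanti, fun t ht => ?_⟩
  calc f (Z t) - f x₀ ≤ bregmanGap μ f g g' x₀ (Z t) := hsub_le _
    _ = Real.exp (-β t) * E t := by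
      rw [hE, Real.exp_neg, inv_mul_cancel_left₀ (Real.exp_ne_zero _)]
    _ ≤ Real.exp (-β t) * E 0 :=
      mul_le_mul_of_nonneg_left (hanti self_mem_Ici ht ht) (Real.exp_pos _).le

end InnerProductSpace

/-- Lyapunov convergence of (G-ODE-UC) specialized to `a(t) ≡ 1`, i.e. the single-variable
dynamics `(d/dt)∇g(Z) = −(e^{α}/μ)∇f(Z)`, in the uniformly convex case. -/
theorem godeuc_a_one_energy_decay {n : ℕ} (μ : ℝ) (hμ : 0 < μ)
    (f g : EuclideanSpace ℝ (Fin n) → ℝ)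
    (f' g' : EuclideanSpace ℝ (Fin n) → EuclideanSpace ℝ (Fin n))
    (hf' : ∀ x, HasGradientAt f (f' x) x)
    (hg' : ∀ x, HasGradientAt g (g' x) x)
    (hgconv : ConvexOn ℝ univ g)
    (hunif : ∀ x y, μ * breg g g' x y ≤ breg f f' x y)
    (hf0 : f 0 = 0)
    (hfnn : ∀ x, 0 ≤ f x)
    (α β α' β' : ℝ → ℝ)
    (hα : ∀ t, 0 ≤ t → HasDerivAt α (α' t) t)
    (hβ : ∀ t, 0 ≤ t → HasDerivAt β (β' t) t)
    (hscale : ∀ t, 0 ≤ t → 0 < β' t ∧ β' t ≤ Real.exp (α t))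
    (Z Z' : ℝ → EuclideanSpace ℝ (Fin n))
    (hZ : ∀ t, 0 ≤ t → HasDerivAt Z (Z' t) t)
    (hODE : ∀ t, 0 ≤ t →
      HasDerivAt (fun u => g' (Z u)) (-(Real.exp (α t) / μ) • f' (Z t)) t)
    (E : ℝ → ℝ)
    (hE : ∀ t, E t = Real.exp (β t) * (μ * breg g g' 0 (Z t) + f (Z t))) :
    AntitoneOn E (Ici 0) ∧ ∀ t, 0 ≤ t → f (Z t) ≤ Real.exp (-β t) * E 0 := by
  simpa only [hf0, sub_zero] using godeuc_a_one_energy_decay_general hμ hf' hg' hgconv (hunif 0)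
    (fun x => hf0.trans_le (hfnn x)) (fun t ht => (hβ t ht).hasDerivWithinAt)
    (fun t ht => (hscale t ht).2) (fun t ht => (hZ t ht).hasDerivWithinAt)
    (fun t ht => (hODE t ht).hasDerivWithinAt)
    (fun t => by rw [hE t, bregmanGap, hf0, sub_zero]; rfl)
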